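/- Let 0 < s ≤ t, let (x, y) be an admissible reverse transition (x and y differ in exactly one coordinate j with x j = m and y j ≠ m), and suppose q_s x > 0 (so q_u x > 0 for all u > 0). Then the change of the score over [s, t] is controlled by | q_t y / q_t x − q_s y / q_s x | ≤ (t − s) · sup_{u ∈ [s, t]} [ (q_u y / q_u x) · ( (m̄(x) + m̄(y))/u + (2d − m̄(x) − m̄(y)) ) ]. -/

import Mathlib

open Finset

/-- Per-token absorbing transition kernel. -/
noncomputable def absK (S : ℕ) (m : Fin S) (t : ℝ) (a b : Fin S) : ℝ :=
  if a = b then (if a = m then 1 else Real.exp (-t))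
  else (if b = m then 1 - Real.exp (-t) else 0)

/-- Forward marginal at time `t` of the absorbing diffusion started at `q0`. -/
noncomputable def fwd (S d : ℕ) (m : Fin S) (q0 : (Fin d → Fin S) → ℝ) (t : ℝ)
    (x : Fin d → Fin S) : ℝ :=
  ∑ x0 : Fin d → Fin S, q0 x0 * ∏ i : Fin d, absK S m t (x0 i) (x i)

/-- Number of masked coordinates. -/
def nmask (S d : ℕ) (m : Fin S) (x : Fin d → Fin S) : ℕ :=
  (Finset.univ.filter (fun i => x i = m)).card

/-!
A kernel entry with value `k` satisfies `|dk/dt| ≤ c * k`, where `c = 1` if its target is an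
ordinary token and `c = 1 / t` if it is the mask, the latter because `t * exp (-t) ≤ 1 - exp (-t)`.
Such relative rates add up under products and quotients and survive nonnegative combinations, so
`q_t x` has relative rate at most `m̄(x) / t + (d - m̄(x))` and the score at most the sum of the
rates of `x` and `y`. The mean value inequality turns this into the bound on the increment.
-/

/-- `f` has relative rate of change at most `c` at `t`: the bound `c` on the norm of the logarithmic
derivative, multiplied by `‖f t‖` so that it is meaningful also where `f` vanishes. -/
structure HasLogDerivBoundAt {𝕜 F : Type*} [NontriviallyNormedField 𝕜] [NormedAddCommGroup F]
    [NormedSpace 𝕜 F] (f : 𝕜 → F) (c : ℝ) (t : 𝕜) : Prop where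
  differentiableAt : DifferentiableAt 𝕜 f t
  norm_deriv_le : ‖deriv f t‖ ≤ c * ‖f t‖

namespace HasLogDerivBoundAt

theorem const {𝕜 F : Type*} [NontriviallyNormedField 𝕜] [NormedAddCommGroup F] [NormedSpace 𝕜 F]
    {c : ℝ} (hc : 0 ≤ c) (a : F) (t : 𝕜) : HasLogDerivBoundAt (fun _ => a) c t where
  differentiableAt := differentiableAt_const a
  norm_deriv_le := by simpa using mul_nonneg hc (norm_nonneg a)

section NormedField

variable {𝕜 𝕜' : Type*} [NontriviallyNormedField 𝕜] [NormedField 𝕜']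
  [NormedAlgebra 𝕜 𝕜'] {f g : 𝕜 → 𝕜'} {a b : ℝ} {t : 𝕜}

theorem mul (hf : HasLogDerivBoundAt f a t) (hg : HasLogDerivBoundAt g b t) :
    HasLogDerivBoundAt (fun u => f u * g u) (a + b) t where
  differentiableAt := hf.differentiableAt.mul hg.differentiableAt
  norm_deriv_le := calc
    ‖deriv (fun u => f u * g u) t‖ = ‖deriv f t * g t + f t * deriv g t‖ := by
      rw [deriv_fun_mul hf.differentiableAt hg.differentiableAt]
    _ ≤ ‖deriv f t‖ * ‖g t‖ + ‖f t‖ * ‖deriv g t‖ := by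
      simpa only [norm_mul] using norm_add_le (deriv f t * g t) (f t * deriv g t)
    _ ≤ a * ‖f t‖ * ‖g t‖ + ‖f t‖ * (b * ‖g t‖) := by
      gcongr
      exacts [hf.norm_deriv_le, hg.norm_deriv_le]
    _ = (a + b) * ‖f t * g t‖ := by rw [norm_mul]; ring

theorem const_mul (k : 𝕜') (hf : HasLogDerivBoundAt f a t) :
    HasLogDerivBoundAt (fun u => k * f u) a t := by
  simpa only [zero_add] using (const le_rfl k t).mul hf

theorem finset_prod {ι : Type*} {k : ι → 𝕜 → 𝕜'} {c : ι → ℝ} (s : Finset ι)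
    (hk : ∀ i ∈ s, HasLogDerivBoundAt (k i) (c i) t) :
    HasLogDerivBoundAt (fun u => ∏ i ∈ s, k i u) (∑ i ∈ s, c i) t := by
  classical
  induction s using Finset.induction_on with
  | empty => simpa only [prod_empty, sum_empty] using const le_rfl (1 : 𝕜') t
  | insert i s hi ih =>
    simp only [prod_insert hi, sum_insert hi]
    exact (hk i (mem_insert_self i s)).mul (ih fun l hl => hk l (mem_insert_of_mem hl))

end NormedField

section NontriviallyNormedField

variable {𝕜 𝕜' : Type*} [NontriviallyNormedField 𝕜] [NontriviallyNormedField 𝕜']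
  [NormedAlgebra 𝕜 𝕜'] {f g : 𝕜 → 𝕜'} {a b : ℝ} {t : 𝕜}

theorem inv (hf : HasLogDerivBoundAt f a t) (hne : f t ≠ 0) :
    HasLogDerivBoundAt (fun u => (f u)⁻¹) a t where
  differentiableAt := hf.differentiableAt.inv hne
  norm_deriv_le := by
    rw [deriv_fun_inv'' hf.differentiableAt hne, norm_div, norm_neg, norm_pow, norm_inv,
      div_le_iff₀ (by positivity)]
    calc ‖deriv f t‖ ≤ a * ‖f t‖ := hf.norm_deriv_le
      _ = a * ‖f t‖⁻¹ * ‖f t‖ ^ 2 := by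
        rw [sq, mul_assoc, inv_mul_cancel_left₀ (norm_ne_zero_iff.2 hne)]

theorem div (hf : HasLogDerivBoundAt f a t) (hg : HasLogDerivBoundAt g b t) (hne : g t ≠ 0) :
    HasLogDerivBoundAt (fun u => f u / g u) (a + b) t := by
  simpa only [div_eq_mul_inv] using hf.mul (hg.inv hne)

end NontriviallyNormedField

theorem finset_sum {ι : Type*} {f : ι → ℝ → ℝ} {c t : ℝ} (s : Finset ι)
    (hf : ∀ i ∈ s, HasLogDerivBoundAt (f i) c t) (hnonneg : ∀ i ∈ s, 0 ≤ f i t) :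
    HasLogDerivBoundAt (fun u => ∑ i ∈ s, f i u) c t where
  differentiableAt := DifferentiableAt.fun_sum fun i hi => (hf i hi).differentiableAt
  norm_deriv_le := calc
    ‖deriv (fun u => ∑ i ∈ s, f i u) t‖ = ‖∑ i ∈ s, deriv (f i) t‖ := by
      rw [deriv_fun_sum fun i hi => (hf i hi).differentiableAt]
    _ ≤ ∑ i ∈ s, c * ‖f i t‖ := norm_sum_le_of_le s fun i hi => (hf i hi).norm_deriv_le
    _ = c * ∑ i ∈ s, f i t := by
      rw [← mul_sum, sum_congr rfl fun i hi => Real.norm_of_nonneg (hnonneg i hi)]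
    _ = c * ‖∑ i ∈ s, f i t‖ := by rw [Real.norm_of_nonneg (sum_nonneg hnonneg)]

end HasLogDerivBoundAt

theorem norm_sub_le_mul_sSup_of_norm_deriv_le {E : Type*} [NormedAddCommGroup E] [NormedSpace ℝ E]
    {f : ℝ → E} {g : ℝ → ℝ} {s t : ℝ} (hst : s ≤ t)
    (hf : ∀ u ∈ Set.Icc s t, DifferentiableAt ℝ f u)
    (hfg : ∀ u ∈ Set.Icc s t, ‖deriv f u‖ ≤ g u) (hg : BddAbove (g '' Set.Icc s t)) :
    ‖f t - f s‖ ≤ (t - s) * sSup (g '' Set.Icc s t) := by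
  have hbound : ∀ u ∈ Set.Icc s t, ‖deriv f u‖ ≤ sSup (g '' Set.Icc s t) := fun u hu =>
    (hfg u hu).trans (le_csSup hg (Set.mem_image_of_mem g hu))
  simpa only [Real.norm_of_nonneg (sub_nonneg.2 hst), mul_comm] using
    (convex_Icc s t).norm_image_sub_le_of_norm_deriv_le hf hbound
      (Set.left_mem_Icc.2 hst) (Set.right_mem_Icc.2 hst)

theorem mul_exp_neg_le_one_sub_exp_neg (t : ℝ) : t * Real.exp (-t) ≤ 1 - Real.exp (-t) := by
  have h : (t + 1) * Real.exp (-t) ≤ Real.exp t * Real.exp (-t) := by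
    gcongr
    exact Real.add_one_le_exp t
  rw [← Real.exp_add, add_neg_cancel, Real.exp_zero] at h
  linarith

theorem hasDerivAt_exp_neg (t : ℝ) :
    HasDerivAt (fun u : ℝ => Real.exp (-u)) (-Real.exp (-t)) t := by
  simpa using (hasDerivAt_neg t).exp

theorem hasLogDerivBoundAt_exp_neg (t : ℝ) :
    HasLogDerivBoundAt (fun u : ℝ => Real.exp (-u)) 1 t where
  differentiableAt := (hasDerivAt_exp_neg t).differentiableAt
  norm_deriv_le := by rw [(hasDerivAt_exp_neg t).deriv, norm_neg, one_mul]

theorem hasLogDerivBoundAt_one_sub_exp_neg {t : ℝ} (ht : 0 < t) :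
    HasLogDerivBoundAt (fun u : ℝ => 1 - Real.exp (-u)) (1 / t) t where
  differentiableAt := by fun_prop
  norm_deriv_le := by
    have hderiv : deriv (fun u : ℝ => 1 - Real.exp (-u)) t = Real.exp (-t) := by
      simpa using ((hasDerivAt_exp_neg t).const_sub 1).deriv
    have hnonneg : 0 ≤ 1 - Real.exp (-t) := by simpa using ht.le
    rw [hderiv, Real.norm_of_nonneg (Real.exp_nonneg _), Real.norm_of_nonneg hnonneg,
      one_div_mul_eq_div, le_div_iff₀ ht, mul_comm]
    exact mul_exp_neg_le_one_sub_exp_neg t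

section Absorbing

variable {S d : ℕ} {m : Fin S} {q0 : (Fin d → Fin S) → ℝ} {s t : ℝ}

theorem absK_nonneg (ht : 0 ≤ t) (a b : Fin S) : 0 ≤ absK S m t a b := by
  have hexp : Real.exp (-t) ≤ 1 := by simpa using ht
  have := Real.exp_pos (-t)
  unfold absK
  split_ifs <;> linarith

theorem absK_pos_of_ne_zero {a b : Fin S} (h : absK S m s a b ≠ 0) (ht : 0 < t) :
    0 < absK S m t a b := by
  have hexp : Real.exp (-t) < 1 := by simpa using ht
  have := Real.exp_pos (-t)
  unfold absK at h ⊢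
  split_ifs at h ⊢ <;> first | linarith | exact absurd rfl h

theorem hasLogDerivBoundAt_absK (ht : 0 < t) (a b : Fin S) :
    HasLogDerivBoundAt (fun u => absK S m u a b) (if b = m then 1 / t else 1) t := by
  unfold absK
  obtain rfl | hbm := eq_or_ne b m <;> obtain rfl | hab := eq_or_ne a b <;>
    simp only [*, if_true, if_false]
  · exact .const (by positivity) 1 t
  · exact hasLogDerivBoundAt_one_sub_exp_neg ht
  · exact hasLogDerivBoundAt_exp_neg t
  · exact .const zero_le_one 0 t

theorem mul_prod_absK_nonneg (hq0 : ∀ x, 0 ≤ q0 x) (ht : 0 ≤ t) (x0 x : Fin d → Fin S) :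
    0 ≤ q0 x0 * ∏ i, absK S m t (x0 i) (x i) :=
  mul_nonneg (hq0 x0) (prod_nonneg fun i _ => absK_nonneg ht (x0 i) (x i))

theorem fwd_nonneg (hq0 : ∀ x, 0 ≤ q0 x) (ht : 0 ≤ t) (x : Fin d → Fin S) :
    0 ≤ fwd S d m q0 t x :=
  sum_nonneg fun x0 _ => mul_prod_absK_nonneg hq0 ht x0 x

theorem fwd_pos_of_ne_zero (hq0 : ∀ x, 0 ≤ q0 x) {x : Fin d → Fin S}
    (h : fwd S d m q0 s x ≠ 0) (ht : 0 < t) : 0 < fwd S d m q0 t x := by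
  obtain ⟨x0, -, hx0⟩ := exists_ne_zero_of_sum_ne_zero h
  obtain ⟨hq, hprod⟩ := mul_ne_zero_iff.1 hx0
  have hker : 0 < ∏ i, absK S m t (x0 i) (x i) := prod_pos fun i hi =>
    absK_pos_of_ne_zero (prod_ne_zero_iff.1 hprod i hi) ht
  exact sum_pos' (fun z _ => mul_prod_absK_nonneg hq0 ht.le z x)
    ⟨x0, mem_univ x0, mul_pos ((hq0 x0).lt_of_ne' hq) hker⟩

theorem sum_ite_eq_mask {R : Type*} [Ring R] (x : Fin d → Fin S) (a b : R) :
    ∑ i, (if x i = m then a else b) = nmask S d m x * a + (d - nmask S d m x) * b := by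
  have hcard : (#{i | x i = m} : R) + #{i | x i ≠ m} = d := by
    rw [← Nat.cast_add, card_filter_add_card_filter_not, card_fin]
  rw [sum_ite, sum_const, sum_const, nsmul_eq_mul, nsmul_eq_mul, nmask, ← hcard,
    add_sub_cancel_left]

theorem hasLogDerivBoundAt_fwd (hq0 : ∀ x, 0 ≤ q0 x) (ht : 0 < t) (x : Fin d → Fin S) :
    HasLogDerivBoundAt (fun u => fwd S d m q0 u x)
      (nmask S d m x / t + (d - nmask S d m x)) t := by
  have hrate : ∑ i, (if x i = m then 1 / t else 1) =
      nmask S d m x / t + (d - nmask S d m x) := by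
    rw [sum_ite_eq_mask, mul_one_div, mul_one]
  rw [← hrate]
  refine .finset_sum _ (fun x0 _ => ?_) fun x0 _ => mul_prod_absK_nonneg hq0 ht.le x0 x
  exact .const_mul _ (.finset_prod _ fun i _ => hasLogDerivBoundAt_absK ht (x0 i) (x i))

theorem hasLogDerivBoundAt_score (hq0 : ∀ x, 0 ≤ q0 x) (ht : 0 < t) {x : Fin d → Fin S}
    (hx : fwd S d m q0 t x ≠ 0) (y : Fin d → Fin S) :
    HasLogDerivBoundAt (fun u => fwd S d m q0 u y / fwd S d m q0 u x)
      ((nmask S d m x + nmask S d m y) / t + (2 * d - nmask S d m x - nmask S d m y)) t := by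
  have hrate : (nmask S d m x + nmask S d m y) / t + (2 * d - nmask S d m x - nmask S d m y) =
      nmask S d m y / t + (d - nmask S d m y) + (nmask S d m x / t + (d - nmask S d m x)) := by
    ring
  rw [hrate]
  exact (hasLogDerivBoundAt_fwd hq0 ht y).div (hasLogDerivBoundAt_fwd hq0 ht x) hx

theorem absorbing_score_change_bound_general (hq0 : ∀ x, 0 ≤ q0 x) (hs : 0 < s) (hst : s ≤ t)
    {x : Fin d → Fin S} (y : Fin d → Fin S) (hqx : 0 < fwd S d m q0 s x) :
    |fwd S d m q0 t y / fwd S d m q0 t x - fwd S d m q0 s y / fwd S d m q0 s x|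
      ≤ (t - s) *
          sSup ((fun u : ℝ =>
              (fwd S d m q0 u y / fwd S d m q0 u x) *
                (((nmask S d m x : ℝ) + (nmask S d m y : ℝ)) / u
                  + (2 * (d : ℝ) - (nmask S d m x : ℝ) - (nmask S d m y : ℝ))))
            '' Set.Icc s t) := by
  have hpos : ∀ u ∈ Set.Icc s t, 0 < u := fun u hu => hs.trans_le hu.1
  have hx : ∀ u ∈ Set.Icc s t, 0 < fwd S d m q0 u x := fun u hu =>
    fwd_pos_of_ne_zero hq0 hqx.ne' (hpos u hu)
  have hscore := fun u hu => hasLogDerivBoundAt_score hq0 (hpos u hu) (hx u hu).ne' y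
  have hdiff := fun u hu => (hscore u hu).differentiableAt
  refine norm_sub_le_mul_sSup_of_norm_deriv_le
    (f := fun u => fwd S d m q0 u y / fwd S d m q0 u x) hst hdiff (fun u hu => ?_) ?_
  · have hnonneg : 0 ≤ fwd S d m q0 u y / fwd S d m q0 u x :=
      div_nonneg (fwd_nonneg hq0 (hpos u hu).le y) (hx u hu).le
    simpa only [Real.norm_of_nonneg hnonneg, mul_comm] using (hscore u hu).norm_deriv_le
  · refine isCompact_Icc.bddAbove_image (.mul (fun u hu => ?_) (.add ?_ continuousOn_const))
    · exact (hdiff u hu).continuousAt.continuousWithinAt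
    · exact continuousOn_const.div continuousOn_id fun u hu => (hpos u hu).ne'

end Absorbing

/-- Control on the change of the score of an admissible reverse transition over `[s, t]`. -/
theorem absorbing_score_change_bound (S d : ℕ) (hS : 2 ≤ S) (hd : 1 ≤ d) (m : Fin S)
    (q0 : (Fin d → Fin S) → ℝ) (hq0 : ∀ x, 0 ≤ q0 x)
    (hq0sum : ∑ x : Fin d → Fin S, q0 x = 1)
    (s t : ℝ) (hs : 0 < s) (hst : s ≤ t) (x y : Fin d → Fin S) (j : Fin d)
    (hxj : x j = m) (hyj : y j ≠ m) (hoff : ∀ i : Fin d, i ≠ j → x i = y i)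
    (hqx : 0 < fwd S d m q0 s x) :
    |fwd S d m q0 t y / fwd S d m q0 t x - fwd S d m q0 s y / fwd S d m q0 s x|
      ≤ (t - s) *
          sSup ((fun u : ℝ =>
              (fwd S d m q0 u y / fwd S d m q0 u x) *
                (((nmask S d m x : ℝ) + (nmask S d m y : ℝ)) / u
                  + (2 * (d : ℝ) - (nmask S d m x : ℝ) - (nmask S d m y : ℝ))))
            '' Set.Icc s t) :=
  absorbing_score_change_bound_general hq0 hs hst y hqx
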